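/- Let {B_i}_{i=0}^{n−1} be an obedient and incentive compatible deterministic representation whose Sender's ex ante payoff is maximal among all obedient and incentive compatible deterministic representations, and let j = min{i : B_i has nonempty interior}. Then E[ω | ω ∈ B_j] ∈ [γ_j, γ_{j+1}), and E[ω | ω ∈ B_k] = γ_k for every k > j such that B_k has nonempty interior. -/

import Mathlib

open MeasureTheory Set

noncomputable section

namespace VerifiableDisclosure

/-- The measure on `[0,1]` induced by a density `f`. -/
def densMeasure (f : ℝ → ℝ) : Measure ℝ :=
  (volume.restrict (Icc (0:ℝ) 1)).withDensity (fun x => ENNReal.ofReal (f x))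

/-- `f` is a strictly positive density on `[0,1]` inducing a probability measure. -/
structure IsPrior (f : ℝ → ℝ) : Prop where
  meas : Measurable f
  pos : ∀ x ∈ Icc (0:ℝ) 1, 0 < f x
  prob : densMeasure f univ = 1

/-- The CDF of a measure on `ℝ`. -/
def mcdf (μ : Measure ℝ) (x : ℝ) : ℝ := (μ (Iic x)).toReal

/-- The support of a measure on `ℝ`: points all of whose neighborhoods have positive mass. -/
def msupport (μ : Measure ℝ) : Set ℝ := {x | ∀ U ∈ nhds x, μ U ≠ 0}

/-- `G` is a distribution on `[0,1]` that is a mean-preserving contraction of `μ`. -/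
def IsMPC (μ G : Measure ℝ) : Prop :=
  IsProbabilityMeasure G ∧ msupport G ⊆ Icc (0:ℝ) 1 ∧
    (∀ x ∈ Icc (0:ℝ) 1, (∫ s in (0:ℝ)..x, mcdf G s) ≤ ∫ s in (0:ℝ)..x, mcdf μ s) ∧
    (∫ s in (0:ℝ)..(1:ℝ), mcdf G s) = ∫ s in (0:ℝ)..(1:ℝ), mcdf μ s

/-- Conditional mean of `μ` on the set `B`. -/
def condMean (μ : Measure ℝ) (B : Set ℝ) : ℝ := (∫ ω in B, ω ∂μ) / (μ B).toReal

/-- `G` is a bi-pooling distribution relative to the prior `μ`. -/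
def IsBiPooling (μ G : Measure ℝ) : Prop :=
  IsMPC μ G ∧
    ∃ (ι : Type) (a b : ι → ℝ),
      (∀ i, (0:ℝ) ≤ a i ∧ a i ≤ b i ∧ b i ≤ 1) ∧
      (Pairwise fun i j => Disjoint (Icc (a i) (b i)) (Icc (a j) (b j))) ∧
      (∀ i, G (Icc (a i) (b i)) = μ (Icc (a i) (b i))) ∧
      (∀ i, (msupport (G.restrict (Icc (a i) (b i)))).encard ≤ 2) ∧
      (∀ s : Set ℝ, MeasurableSet s → s ⊆ Icc (0:ℝ) 1 \ (⋃ i, Icc (a i) (b i)) → G s = μ s)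

/-- `G` is a bi-pooling solution of the information design problem with value function `u`. -/
def IsBiPoolingSolution (μ G : Measure ℝ) (u : ℝ → ℝ) : Prop :=
  IsBiPooling μ G ∧ ∀ G' : Measure ℝ, IsMPC μ G' → (∫ x, u x ∂G') ≤ ∫ x, u x ∂G

/-- A deterministic representation: closed sets covering `[0,1]`, pairwise `μ`-null overlaps. -/
def IsDetRep (μ : Measure ℝ) (n : ℕ) (B : ℕ → Set ℝ) : Prop :=
  (∀ i < n, IsClosed (B i) ∧ B i ⊆ Icc (0:ℝ) 1) ∧
    (⋃ i ∈ Finset.range n, B i) = Icc (0:ℝ) 1 ∧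
    (∀ i < n, ∀ j < n, i ≠ j → μ (B i ∩ B j) = 0)

/-- Incentive compatibility of a deterministic representation. -/
def IsIC (n : ℕ) (γ : ℕ → ℝ) (B : ℕ → Set ℝ) : Prop :=
  ∀ i < n, Icc (γ i) (γ (i+1)) ⊆ ⋃ j ∈ Finset.Ico i n, B j

/-- Obedience of a deterministic representation. -/
def IsObedient (μ : Measure ℝ) (n : ℕ) (γ : ℕ → ℝ) (B : ℕ → Set ℝ) : Prop :=
  ∀ i < n, μ (B i) ≠ 0 → condMean μ (B i) ∈ Icc (γ i) (γ (i+1))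

/-- `B` is a deterministic representation of the distribution `G`:
`G` places mass `μ (B i)` on the conditional mean of `B i`. -/
def IsDetRepOf (μ : Measure ℝ) (n : ℕ) (B : ℕ → Set ℝ) (G : Measure ℝ) : Prop :=
  IsDetRep μ n B ∧
    G = ∑ i ∈ Finset.range n, (μ (B i)) • Measure.dirac (condMean μ (B i))

/-- `{BL, BH}` is a nested intervals pair. -/
def IsNestedPair (BL BH : Set ℝ) : Prop :=
  ∃ w₁ b₁ b₂ w₂ : ℝ, w₁ < b₁ ∧ b₁ ≤ b₂ ∧ b₂ < w₂ ∧
    BL = Icc b₁ b₂ ∧ BH = Icc w₁ b₁ ∪ Icc b₂ w₂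

/-- A canonical representation of `G`: a deterministic representation of `G` in which every
element with nonempty interior is either an interval, or the outer member of a nested
intervals pair whose inner member has a lower index. -/
def IsCanonicalRep (μ : Measure ℝ) (n : ℕ) (B : ℕ → Set ℝ) (G : Measure ℝ) : Prop :=
  IsDetRepOf μ n B G ∧
    ∀ i < n, (interior (B i)).Nonempty →
      (∃ c d : ℝ, B i = Icc c d) ∨ ∃ L < i, IsNestedPair (B L) (B i)

/-- Index `i` is skipped: `B i` has empty interior. -/
def Skipped (B : ℕ → Set ℝ) (i : ℕ) : Prop := interior (B i) = ∅

/-- A skipped index `i` is harmlessly skipped if `A i ⊆ ⋃_{k > i} B k`. -/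
def HarmlesslySkipped (n : ℕ) (γ : ℕ → ℝ) (B : ℕ → Set ℝ) (i : ℕ) : Prop :=
  Icc (γ i) (γ (i+1)) ⊆ ⋃ k ∈ Finset.Ioo i n, B k

/-- Laminar representation property. -/
def IsLaminar (n : ℕ) (B : ℕ → Set ℝ) : Prop :=
  ∀ i < n, B i = closure ((convexHull ℝ (B i)) \ ⋃ j ∈ Finset.range i, convexHull ℝ (B j))

/-- Sender's ex ante payoff of a deterministic representation. -/
def payoff (μ : Measure ℝ) (n : ℕ) (v : ℕ → ℝ) (B : ℕ → Set ℝ) : ℝ :=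
  ∑ i ∈ Finset.range n, v i * (μ (B i)).toReal

/-- Conditional CDF of the prior with density `f` on the interval `[w₁, w₂]`. -/
def condCDF' (f : ℝ → ℝ) (w₁ w₂ x : ℝ) : ℝ :=
  (mcdf (densMeasure f) x - mcdf (densMeasure f) w₁) /
    (mcdf (densMeasure f) w₂ - mcdf (densMeasure f) w₁)

/-- `{zL, zH}` is a feasible bi-pooling support for the interval `[w₁, w₂]`. -/
def FeasibleSupport (f : ℝ → ℝ) (w₁ w₂ zL zH : ℝ) : Prop :=
  ∃ G : Measure ℝ, IsProbabilityMeasure G ∧ msupport G ⊆ {zL, zH} ∧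
    (∀ x ∈ Icc w₁ w₂, (∫ s in w₁..x, mcdf G s) ≤ ∫ s in w₁..x, condCDF' f w₁ w₂ s) ∧
    (∫ s in w₁..w₂, mcdf G s) = ∫ s in w₁..w₂, condCDF' f w₁ w₂ s

/-!
If `condMean μ (B k) > γ k` for some recommended `k > j`, move a small piece `B j ∩ Iic t` of the
bottom of `B j` to `B k`. Discarding its bottom can only raise the mean of `B j`, and a small enough
piece leaves the mean of `B k` above `γ k`, so the lower obedience constraints survive. The upper
ones come for free: by incentive compatibility almost every state of `B i` is at most `γ (i + 1)`.
The move sends messages up only, hence preserves incentive compatibility, and it strictly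
increases the payoff.
-/

section ConditionalMean

variable {μ : Measure ℝ} {S T : Set ℝ} {a c t : ℝ}

theorem condMean_eq_setAverage (μ : Measure ℝ) (S : Set ℝ) :
    condMean μ S = ⨍ ω in S, ω ∂μ := by
  rw [setAverage_eq, smul_eq_mul, inv_mul_eq_div]
  rfl

theorem condMean_lt_of_measure_inter_Ioi_eq_zero [IsFiniteMeasure μ] [NullSingletonClass μ]
    (hS : IntegrableOn (fun ω => ω) S μ) (h0 : μ S ≠ 0) (hnull : μ (S ∩ Ioi c) = 0) :
    condMean μ S < c := by
  have hpos := measure_setAverage_le_pos h0 (measure_ne_top μ S) hS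
  rw [← condMean_eq_setAverage] at hpos
  by_contra! hc
  refine hpos.ne' (measure_mono_null ?_ (measure_union_null hnull (measure_singleton c)))
  rintro ω ⟨hωS, hω⟩
  rcases (hc.trans hω).lt_or_eq with hlt | heq
  exacts [Or.inl ⟨hωS, hlt⟩, Or.inr heq.symm]

theorem setIntegral_sub_const [IsFiniteMeasure μ] (hS : IntegrableOn (fun ω => ω) S μ) (c : ℝ) :
    ∫ ω in S, (ω - c) ∂μ = μ.real S * (condMean μ S - c) := by
  have hmean : ∫ ω in S, ω ∂μ = μ.real S * condMean μ S := by
    rw [condMean_eq_setAverage, ← smul_eq_mul, measure_smul_setAverage _ (measure_ne_top μ S)]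
  rw [integral_sub hS (integrable_const c), setIntegral_const, hmean, smul_eq_mul, mul_sub]

theorem le_condMean_iff [IsFiniteMeasure μ] (hS : IntegrableOn (fun ω => ω) S μ) (h0 : μ S ≠ 0) :
    c ≤ condMean μ S ↔ 0 ≤ ∫ ω in S, (ω - c) ∂μ := by
  have hpos : 0 < μ.real S := ENNReal.toReal_pos h0 (measure_ne_top μ S)
  rw [setIntegral_sub_const hS, mul_nonneg_iff_of_pos_left hpos, sub_nonneg]

theorem condMean_le_condMean_inter_Ici [IsFiniteMeasure μ] (hS : IntegrableOn (fun ω => ω) S μ)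
    (h0 : μ (S ∩ Ici t) ≠ 0) : condMean μ S ≤ condMean μ (S ∩ Ici t) := by
  rw [le_condMean_iff (hS.mono_set inter_subset_left) h0]
  set m := condMean μ S
  rcases le_total t m with htm | hmt
  · have hsum := integral_inter_add_sdiff (measurableSet_Ici (a := t))
      (hS.sub (integrable_const m))
    have htotal : ∫ ω in S, (ω - m) ∂μ = 0 := by rw [setIntegral_sub_const hS, sub_self, mul_zero]
    have hlow : ∫ ω in S \ Ici t, (ω - m) ∂μ ≤ 0 := by
      refine setIntegral_nonpos_of_ae_restrict
        (ae_restrict_of_ae_restrict_of_subset (t := (Ici t)ᶜ) (fun ω hω => hω.2) ?_)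
      filter_upwards [ae_restrict_mem measurableSet_Ici.compl] with ω hω
      exact sub_nonpos.mpr ((notMem_Ici.mp hω).le.trans htm)
    simp only [Pi.sub_apply] at hsum
    linarith
  · refine setIntegral_nonneg_of_ae_restrict
      (ae_restrict_of_ae_restrict_of_subset inter_subset_right ?_)
    filter_upwards [ae_restrict_mem measurableSet_Ici] with ω hω
    exact sub_nonneg.mpr (hmt.trans hω)

theorem le_condMean_union [IsFiniteMeasure μ] (hS : IntegrableOn (fun ω => ω) S μ)
    (hT : IntegrableOn (fun ω => ω) T μ) (hTm : MeasurableSet T) (hST : AEDisjoint μ S T)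
    (h0 : μ (S ∪ T) ≠ 0) (ha : ∀ ω ∈ T, a ≤ ω)
    (hsmall : (c - a) * μ.real T ≤ μ.real S * (condMean μ S - c)) :
    c ≤ condMean μ (S ∪ T) := by
  have hTc : IntegrableOn (fun ω => ω - c) T μ := hT.sub (integrable_const c)
  have hTlow : (a - c) * μ.real T ≤ ∫ ω in T, (ω - c) ∂μ :=
    setIntegral_ge_of_const_le_real hTm (measure_ne_top μ T)
      (fun ω hω => sub_le_sub_right (ha ω hω) c) hTc
  have hSc : IntegrableOn (fun ω => ω - c) S μ := hS.sub (integrable_const c)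
  rw [le_condMean_iff (hS.union hT) h0, setIntegral_union₀ hST hTm.nullMeasurableSet hSc hTc,
    setIntegral_sub_const hS]
  linarith

end ConditionalMean

section AtomlessMeasure

variable {μ : Measure ℝ} [IsFiniteMeasure μ] [NullSingletonClass μ]

theorem continuous_measureReal_Iic : Continuous fun t => μ.real (Iic t) := by
  have hprim : ∀ t, μ.real (Iic t) = (∫ _ in (0 : ℝ)..t, (1 : ℝ) ∂μ) + μ.real (Iic 0) := by
    intro t
    rw [← intervalIntegral.integral_Iic_sub_Iic integrableOn_const integrableOn_const]
    simp
  refine Continuous.congr ?_ fun t => (hprim t).symm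
  exact (intervalIntegral.continuous_primitive (fun _ _ => intervalIntegrable_const) 0).add_const _

theorem exists_measureReal_Iic_pos_lt (hμ : μ ≠ 0) {ε : ℝ} (hε : 0 < ε) :
    ∃ t, 0 < μ.real (Iic t) ∧ μ.real (Iic t) < ε := by
  have hbot : Filter.Tendsto (fun t => μ.real (Iic t)) Filter.atBot (nhds 0) := by
    have := tendsto_measure_iInter_atBot (μ := μ) (fun t : ℝ => nullMeasurableSet_Iic)
      monotone_Iic ⟨0, measure_ne_top μ _⟩
    rw [iInter_Iic_eq_empty_iff.mpr (by simp), measure_empty] at this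
    exact (ENNReal.tendsto_toReal ENNReal.zero_ne_top).comp this
  have htop : Filter.Tendsto (fun t => μ.real (Iic t)) Filter.atTop (nhds (μ.real univ)) :=
    (ENNReal.tendsto_toReal (measure_ne_top μ univ)).comp (tendsto_measure_Iic_atTop μ)
  have hmass : 0 < μ.real univ :=
    ENNReal.toReal_pos (Measure.measure_univ_ne_zero.mpr hμ) (measure_ne_top μ univ)
  obtain ⟨δ, hδ0, hδ⟩ := exists_between (lt_min hmass hε)
  obtain ⟨hδμ, hδε⟩ := lt_min_iff.mp hδ
  obtain ⟨t, rfl⟩ := mem_range_of_exists_le_of_exists_ge (continuous_measureReal_Iic (μ := μ))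
    (hbot.eventually_le_const hδ0).exists (htop.eventually_const_le hδμ).exists
  exact ⟨t, hδ0, hδε⟩

theorem exists_measureReal_inter_Iic_pos_lt {S : Set ℝ} (hS : μ S ≠ 0) {ε : ℝ} (hε : 0 < ε) :
    ∃ t, 0 < μ.real (S ∩ Iic t) ∧ μ.real (S ∩ Iic t) < ε := by
  simpa only [measureReal_restrict_apply measurableSet_Iic, inter_comm] using
    exists_measureReal_Iic_pos_lt (Measure.restrict_eq_zero.not.mpr hS) hε

theorem measureReal_inter_Iic_add_inter_Ici (S : Set ℝ) (t : ℝ) :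
    μ.real (S ∩ Iic t) + μ.real (S ∩ Ici t) = μ.real S := by
  rw [← measureReal_inter_add_sdiff measurableSet_Iic (s := S) (t := Iic t), sdiff_eq, compl_Iic,
    measureReal_congr ((ae_eq_refl S).inter Ioi_ae_eq_Ici)]

end AtomlessMeasure

theorem exists_mem_Icc_succ_of_le_of_le {α : Type*} [LinearOrder α] {γ : ℕ → α} {a m : ℕ} {x : α}
    (ham : a < m) (ha : γ a ≤ x) (hm : x ≤ γ m) :
    ∃ l, a ≤ l ∧ l < m ∧ x ∈ Icc (γ l) (γ (l + 1)) := by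
  induction m, ham using Nat.le_induction with
  | base => exact ⟨a, le_rfl, a.lt_succ_self, ha, hm⟩
  | succ m ham ih =>
    rcases le_total (γ m) x with h | h
    · exact ⟨m, Nat.le_of_lt ham, m.lt_succ_self, h, hm⟩
    · obtain ⟨l, hal, hlm, hx⟩ := ih h
      exact ⟨l, hal, hlm.trans m.lt_succ_self, hx⟩

section Representation

variable {μ : Measure ℝ} {n : ℕ} {γ : ℕ → ℝ} {B : ℕ → Set ℝ} {i : ℕ}

theorem IsDetRep.measurableSet (hdet : IsDetRep μ n B) (hi : i < n) : MeasurableSet (B i) :=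
  (hdet.1 i hi).1.measurableSet

theorem IsDetRep.subset_Icc (hdet : IsDetRep μ n B) (hi : i < n) : B i ⊆ Icc 0 1 :=
  (hdet.1 i hi).2

theorem IsDetRep.aedisjoint (hdet : IsDetRep μ n B) (hi : i < n) {m : ℕ} (hm : m < n)
    (him : i ≠ m) : AEDisjoint μ (B i) (B m) :=
  hdet.2.2 i hi m hm him

theorem IsDetRep.integrableOn [IsFiniteMeasure μ] (hdet : IsDetRep μ n B) (hi : i < n) :
    IntegrableOn (fun ω => ω) (B i) μ :=
  (continuous_id.continuousOn.integrableOn_compact isCompact_Icc).mono_set (hdet.subset_Icc hi)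

theorem IsDetRep.condMean_le_one [IsFiniteMeasure μ] (hdet : IsDetRep μ n B) (hi : i < n)
    (h0 : μ (B i) ≠ 0) : condMean μ (B i) ≤ 1 := by
  obtain ⟨ω, hω, hmean⟩ := exists_setAverage_le h0 (measure_ne_top μ _) (hdet.integrableOn hi)
  rw [← condMean_eq_setAverage] at hmean
  exact hmean.trans (hdet.subset_Icc hi hω).2

theorem IsIC.exists_mem (hic : IsIC n γ B) (hi : i < n) {ω : ℝ}
    (hω : ω ∈ Icc (γ i) (γ (i + 1))) : ∃ l, i ≤ l ∧ l < n ∧ ω ∈ B l := by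
  simpa only [mem_iUnion, Finset.mem_Ico, exists_prop, and_assoc] using hic i hi hω

theorem IsIC.measure_inter_Ioi_eq_zero (hic : IsIC n γ B) (hdet : IsDetRep μ n B)
    (hγn : 1 ≤ γ n) (hi : i < n) : μ (B i ∩ Ioi (γ (i + 1))) = 0 := by
  have hsub : B i ∩ Ioi (γ (i + 1)) ⊆ ⋃ m ∈ Finset.Ioo i n, B i ∩ B m := by
    rintro ω ⟨hωB, hω⟩
    have hω1 : ω ≤ γ n := (hdet.subset_Icc hi hωB).2.trans hγn
    have hin : i + 1 ≠ n := fun h => (h ▸ mem_Ioi.mp hω).not_ge hω1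
    obtain ⟨l, hil, hln, hωl⟩ :=
      exists_mem_Icc_succ_of_le_of_le (by omega : i + 1 < n) (le_of_lt hω) hω1
    obtain ⟨m, hlm, hmn, hωm⟩ := hic.exists_mem hln hωl
    exact mem_biUnion (x := m) (Finset.mem_Ioo.mpr ⟨by omega, hmn⟩) ⟨hωB, hωm⟩
  refine measure_mono_null hsub ((measure_biUnion_null_iff (Finset.countable_toSet _)).mpr ?_)
  intro m hm
  obtain ⟨him, hmn⟩ := Finset.mem_Ioo.mp hm
  exact hdet.aedisjoint hi hmn him.ne

theorem IsIC.condMean_lt [IsFiniteMeasure μ] [NullSingletonClass μ] (hic : IsIC n γ B)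
    (hdet : IsDetRep μ n B) (hγn : 1 ≤ γ n) (hi : i < n) (h0 : μ (B i) ≠ 0) :
    condMean μ (B i) < γ (i + 1) :=
  condMean_lt_of_measure_inter_Ioi_eq_zero (hdet.integrableOn hi) h0
    (hic.measure_inter_Ioi_eq_zero hdet hγn hi)

end Representation

/-- The representation obtained from `B` by moving the part of `B j` below `t` from `B j` to `B k`,
the deviation of the Sender used against non-optimal representations. Both parts of `B j` keep the
point `t`, so that they stay closed. Meant for `j ≠ k`. -/
def reassignBelow (B : ℕ → Set ℝ) (j k : ℕ) (t : ℝ) : ℕ → Set ℝ :=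
  Function.update (Function.update B k (B k ∪ B j ∩ Iic t)) j (B j ∩ Ici t)

section ReassignBelow

variable {μ : Measure ℝ} {n : ℕ} {γ v : ℕ → ℝ} {B : ℕ → Set ℝ} {i j k : ℕ} {t x : ℝ}

theorem reassignBelow_source : reassignBelow B j k t j = B j ∩ Ici t :=
  Function.update_self ..

theorem reassignBelow_target (hjk : j ≠ k) :
    reassignBelow B j k t k = B k ∪ B j ∩ Iic t := by
  rw [reassignBelow, Function.update_of_ne hjk.symm, Function.update_self]

theorem reassignBelow_of_ne (hij : i ≠ j) (hik : i ≠ k) : reassignBelow B j k t i = B i := by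
  rw [reassignBelow, Function.update_of_ne hij, Function.update_of_ne hik]

theorem mem_reassignBelow_iff (hjk : j ≠ k) :
    x ∈ reassignBelow B j k t i ↔
      x ∈ B i ∧ (i = j → t ≤ x) ∨ i = k ∧ x ∈ B j ∧ x ≤ t := by
  rcases eq_or_ne i j with rfl | hij
  · simp [reassignBelow_source, hjk]
  rcases eq_or_ne i k with rfl | hik
  · simp [reassignBelow_target hjk, hij]
  · simp [reassignBelow_of_ne hij hik, hij, hik]

theorem mem_reassignBelow_or_of_mem (hjk : j ≠ k) (hx : x ∈ B i) :
    x ∈ reassignBelow B j k t i ∨ i = j ∧ x ∈ reassignBelow B j k t k := by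
  simp only [mem_reassignBelow_iff hjk]
  grind

theorem eq_or_exists_mem_inter_of_mem_reassignBelow (hjk : j ≠ k) (hj : j < n) {a b : ℕ}
    (ha : a < n) (hb : b < n) (hab : a ≠ b)
    (hx : x ∈ reassignBelow B j k t a ∩ reassignBelow B j k t b) :
    x = t ∨ ∃ c < n, ∃ d < n, c ≠ d ∧ x ∈ B c ∩ B d := by
  simp only [mem_inter_iff, mem_reassignBelow_iff hjk] at hx
  rcases hx with ⟨⟨hxa, hta⟩ | ⟨rfl, hxj, hxt⟩, ⟨hxb, htb⟩ | ⟨rfl, hxj', hxt'⟩⟩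
  · exact Or.inr ⟨a, ha, b, hb, hab, hxa, hxb⟩
  · rcases eq_or_ne a j with rfl | haj
    · exact Or.inl (hxt'.antisymm (hta rfl))
    · exact Or.inr ⟨a, ha, j, hj, haj, hxa, hxj'⟩
  · rcases eq_or_ne b j with rfl | hbj
    · exact Or.inl (hxt.antisymm (htb rfl))
    · exact Or.inr ⟨b, hb, j, hj, hbj, hxb, hxj⟩
  · exact absurd rfl hab

theorem isClosed_reassignBelow (hclosed : ∀ i < n, IsClosed (B i)) (hj : j < n) (hk : k < n)
    (hi : i < n) : IsClosed (reassignBelow B j k t i) := by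
  rcases eq_or_ne i j with rfl | hij
  · exact reassignBelow_source ▸ (hclosed i hi).inter isClosed_Ici
  rcases eq_or_ne i k with rfl | hik
  · exact reassignBelow_target hij.symm ▸
      (hclosed i hi).union ((hclosed j hj).inter isClosed_Iic)
  · exact reassignBelow_of_ne hij hik ▸ hclosed i hi

theorem biUnion_reassignBelow (hjk : j ≠ k) (hj : j < n) (hk : k < n) :
    ⋃ i ∈ Finset.range n, reassignBelow B j k t i = ⋃ i ∈ Finset.range n, B i := by
  ext x
  simp only [mem_iUnion, Finset.mem_range, exists_prop]
  constructor
  · rintro ⟨i, hi, hx⟩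
    rcases (mem_reassignBelow_iff hjk).mp hx with ⟨hxi, -⟩ | ⟨-, hxj, -⟩
    exacts [⟨i, hi, hxi⟩, ⟨j, hj, hxj⟩]
  · rintro ⟨i, hi, hx⟩
    rcases mem_reassignBelow_or_of_mem (t := t) hjk hx with hxi | ⟨-, hxk⟩
    exacts [⟨i, hi, hxi⟩, ⟨k, hk, hxk⟩]

theorem measure_inter_reassignBelow_eq_zero [NullSingletonClass μ]
    (hnull : ∀ c < n, ∀ d < n, c ≠ d → μ (B c ∩ B d) = 0) (hjk : j ≠ k) (hj : j < n) {a b : ℕ}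
    (ha : a < n) (hb : b < n) (hab : a ≠ b) :
    μ (reassignBelow B j k t a ∩ reassignBelow B j k t b) = 0 := by
  have hoverlap : ∀ᵐ x ∂μ, ∀ c < n, ∀ d < n, c ≠ d → x ∉ B c ∩ B d := by
    simp only [ae_all_iff]
    exact fun c hc d hd hcd => measure_eq_zero_iff_ae_notMem.mp (hnull c hc d hd hcd)
  rw [measure_eq_zero_iff_ae_notMem]
  filter_upwards [hoverlap, μ.ae_ne t] with x hx hxt hxab
  rcases eq_or_exists_mem_inter_of_mem_reassignBelow hjk hj ha hb hab hxab with
    rfl | ⟨c, hc, d, hd, hcd, hxcd⟩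
  exacts [hxt rfl, hx c hc d hd hcd hxcd]

theorem isDetRep_reassignBelow [NullSingletonClass μ] (hdet : IsDetRep μ n B) (hjk : j ≠ k)
    (hj : j < n) (hk : k < n) : IsDetRep μ n (reassignBelow B j k t) := by
  obtain ⟨hclosed, hcover, hnull⟩ := hdet
  have hcover' := (biUnion_reassignBelow (t := t) hjk hj hk).trans hcover
  refine ⟨fun i hi => ⟨?_, ?_⟩, hcover', fun a ha b hb => ?_⟩
  · exact isClosed_reassignBelow (fun i hi => (hclosed i hi).1) hj hk hi
  · exact hcover' ▸ subset_biUnion_of_mem (u := reassignBelow B j k t) (Finset.mem_range.mpr hi)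
  · exact measure_inter_reassignBelow_eq_zero hnull hjk hj ha hb

theorem isIC_reassignBelow (hic : IsIC n γ B) (hjk : j < k) (hk : k < n) :
    IsIC n γ (reassignBelow B j k t) := by
  intro i hi x hx
  obtain ⟨l, hil, hln, hxl⟩ := hic.exists_mem hi hx
  rcases mem_reassignBelow_or_of_mem (t := t) hjk.ne hxl with hxl | ⟨rfl, hxk⟩
  · exact mem_biUnion (Finset.mem_Ico.mpr ⟨hil, hln⟩) hxl
  · exact mem_biUnion (Finset.mem_Ico.mpr ⟨hil.trans hjk.le, hk⟩) hxk

theorem payoff_reassignBelow [IsFiniteMeasure μ] [NullSingletonClass μ] (hdet : IsDetRep μ n B)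
    (hjk : j ≠ k) (hj : j < n) (hk : k < n) :
    payoff μ n v (reassignBelow B j k t) =
      payoff μ n v B + (v k - v j) * μ.real (B j ∩ Iic t) := by
  have hsource : μ.real (reassignBelow B j k t j) = μ.real (B j) - μ.real (B j ∩ Iic t) := by
    rw [reassignBelow_source, ← measureReal_inter_Iic_add_inter_Ici (B j) t, add_sub_cancel_left]
  have htarget : μ.real (reassignBelow B j k t k) = μ.real (B k) + μ.real (B j ∩ Iic t) := by
    rw [reassignBelow_target hjk, measureReal_union₀
      ((hdet.measurableSet hj).inter measurableSet_Iic).nullMeasurableSet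
      ((hdet.aedisjoint hk hj hjk.symm).mono subset_rfl inter_subset_left)]
  rw [← sub_eq_iff_eq_add', payoff, payoff, ← Finset.sum_sub_distrib,
    Finset.sum_eq_add_of_mem j k (Finset.mem_range.mpr hj) (Finset.mem_range.mpr hk) hjk]
  · simp only [← measureReal_def, hsource, htarget]
    ring
  · rintro i - ⟨hij, hik⟩
    rw [reassignBelow_of_ne hij hik, sub_self]

theorem isObedient_reassignBelow [IsFiniteMeasure μ] [NullSingletonClass μ]
    (hdet : IsDetRep μ n B) (hic : IsIC n γ B) (hob : IsObedient μ n γ B) (hγn : 1 ≤ γ n)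
    (hjk : j < k) (hk : k < n)
    (hsmall : γ k * μ.real (B j ∩ Iic t) ≤ μ.real (B k) * (condMean μ (B k) - γ k)) :
    IsObedient μ n γ (reassignBelow B j k t) := by
  have hj := hjk.trans hk
  have hdet' := isDetRep_reassignBelow (t := t) hdet hjk.ne hj hk
  have hic' := isIC_reassignBelow (t := t) hic hjk hk
  intro i hi h0
  refine ⟨?_, (hic'.condMean_lt hdet' hγn hi h0).le⟩
  rcases eq_or_ne i j with rfl | hij
  · rw [reassignBelow_source] at h0 ⊢
    have h0' : μ (B i) ≠ 0 := fun h => h0 (measure_mono_null inter_subset_left h)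
    exact (hob i hi h0').1.trans (condMean_le_condMean_inter_Ici (hdet.integrableOn hi) h0)
  rcases eq_or_ne i k with rfl | hik
  · rw [reassignBelow_target hjk.ne] at h0 ⊢
    refine le_condMean_union (a := 0) (hdet.integrableOn hi)
      ((hdet.integrableOn hj).mono_set inter_subset_left)
      ((hdet.measurableSet hj).inter measurableSet_Iic)
      ((hdet.aedisjoint hi hj hij).mono subset_rfl inter_subset_left)
      h0 (fun ω hω => (hdet.subset_Icc hj hω.1).1) (by rwa [sub_zero])
  · rw [reassignBelow_of_ne hij hik] at h0 ⊢
    exact (hob i hi h0).1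

end ReassignBelow

/-- `B` maximizes the Sender's ex ante payoff among the obedient and incentive compatible
deterministic representations of `μ`. -/
structure IsOptimalRep (μ : Measure ℝ) (n : ℕ) (γ v : ℕ → ℝ) (B : ℕ → Set ℝ) : Prop where
  isDetRep : IsDetRep μ n B
  isObedient : IsObedient μ n γ B
  isIC : IsIC n γ B
  payoff_le : ∀ B', IsDetRep μ n B' → IsObedient μ n γ B' → IsIC n γ B' →
    payoff μ n v B' ≤ payoff μ n v B

theorem IsOptimalRep.condMean_eq {μ : Measure ℝ} [IsFiniteMeasure μ] [NullSingletonClass μ]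
    {n : ℕ} {γ v : ℕ → ℝ} {B : ℕ → Set ℝ} (hB : IsOptimalRep μ n γ v B) (hγn : 1 ≤ γ n) {j k : ℕ}
    (hjk : j < k) (hk : k < n) (hv : v j < v k) (hj0 : μ (B j) ≠ 0) (hk0 : μ (B k) ≠ 0) :
    condMean μ (B k) = γ k := by
  obtain ⟨hdet, hob, hic, hmax⟩ := hB
  by_contra hne
  have hexcess : γ k < condMean μ (B k) := (hob k hk hk0).1.lt_of_ne' hne
  have hγk : γ k ≤ 1 := hexcess.le.trans (hdet.condMean_le_one hk hk0)
  have hroom : 0 < μ.real (B k) * (condMean μ (B k) - γ k) :=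
    mul_pos (ENNReal.toReal_pos hk0 (measure_ne_top μ _)) (sub_pos.mpr hexcess)
  obtain ⟨t, hpos, hlt⟩ := exists_measureReal_inter_Iic_pos_lt hj0 hroom
  have hsmall := (mul_le_of_le_one_left hpos.le hγk).trans hlt.le
  have hj := hjk.trans hk
  have hle := hmax _ (isDetRep_reassignBelow hdet hjk.ne hj hk)
    (isObedient_reassignBelow hdet hic hob hγn hjk hk hsmall) (isIC_reassignBelow hic hjk hk)
  rw [payoff_reassignBelow hdet hjk.ne hj hk] at hle
  linarith [mul_pos (sub_pos.mpr hv) hpos]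

theorem optimal_representation_means_general {μ : Measure ℝ} [IsFiniteMeasure μ]
    [NullSingletonClass μ] {n : ℕ} {γ v : ℕ → ℝ} {B : ℕ → Set ℝ} (hγn : 1 ≤ γ n)
    (hv : StrictMonoOn v (Iio n)) (hB : IsOptimalRep μ n γ v B) {j : ℕ} (hj : j < n)
    (hj0 : μ (B j) ≠ 0) :
    condMean μ (B j) ∈ Ico (γ j) (γ (j + 1)) ∧
      ∀ k, j < k → k < n → μ (B k) ≠ 0 → condMean μ (B k) = γ k :=
  ⟨⟨(hB.isObedient j hj hj0).1, hB.isIC.condMean_lt hB.isDetRep hγn hj hj0⟩,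
    fun _ hjk hk hk0 => hB.condMean_eq hγn hjk hk (hv hj hk hjk) hj0 hk0⟩

instance (f : ℝ → ℝ) : NullSingletonClass (densMeasure f) := by
  unfold densMeasure
  infer_instance

section IsPrior

variable {f : ℝ → ℝ}

theorem IsPrior.isProbabilityMeasure (hf : IsPrior f) : IsProbabilityMeasure (densMeasure f) :=
  ⟨hf.prob⟩

theorem IsPrior.restrict_absolutelyContinuous (hf : IsPrior f) :
    volume.restrict (Icc 0 1) ≪ densMeasure f := by
  refine withDensity_absolutelyContinuous' hf.meas.ennreal_ofReal.aemeasurable ?_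
  filter_upwards [ae_restrict_mem measurableSet_Icc] with x hx
  exact (ENNReal.ofReal_pos.mpr (hf.pos x hx)).ne'

theorem IsPrior.measure_ne_zero (hf : IsPrior f) {S : Set ℝ} (hS : S ⊆ Icc 0 1)
    (hint : (interior S).Nonempty) : densMeasure f S ≠ 0 := by
  intro h0
  have hvol : volume S = 0 := by
    rw [← Measure.restrict_eq_self volume hS]
    exact hf.restrict_absolutelyContinuous h0
  exact (Measure.measure_pos_of_nonempty_interior volume hint).ne' hvol

end IsPrior

/-- in a Sender-optimal obedient and IC deterministic representation,
the lowest recommended element has conditional mean in `[γ_j, γ_{j+1})`, and every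
higher recommended element has conditional mean exactly at its cutoff. -/
theorem optimal_representation_means
    (f : ℝ → ℝ) (hf : IsPrior f)
    (n : ℕ) (hn : 2 ≤ n)
    (γ : ℕ → ℝ) (hγ0 : γ 0 = 0) (hγn : γ n = 1)
    (hγ : ∀ i < n, γ i < γ (i+1))
    (v : ℕ → ℝ) (hv0 : v 0 = 0) (hv : ∀ i, i + 1 < n → v i < v (i+1))
    (B : ℕ → Set ℝ)
    (hdet : IsDetRep (densMeasure f) n B)
    (hob : IsObedient (densMeasure f) n γ B)
    (hic : IsIC n γ B)
    (hmax : ∀ B' : ℕ → Set ℝ, IsDetRep (densMeasure f) n B' →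
      IsObedient (densMeasure f) n γ B' → IsIC n γ B' →
      payoff (densMeasure f) n v B' ≤ payoff (densMeasure f) n v B)
    (j : ℕ) (hjn : j < n) (hj : (interior (B j)).Nonempty)
    (hjmin : ∀ i < j, interior (B i) = ∅) :
    condMean (densMeasure f) (B j) ∈ Ico (γ j) (γ (j+1)) ∧
    ∀ k, j < k → k < n → (interior (B k)).Nonempty →
      condMean (densMeasure f) (B k) = γ k := by
  have := hf.isProbabilityMeasure
  have hvmono : StrictMonoOn v (Iio n) :=
    strictMonoOn_of_lt_add_one ordConnected_Iio fun i _ _ hi => hv i hi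
  have hmass : ∀ i < n, (interior (B i)).Nonempty → densMeasure f (B i) ≠ 0 :=
    fun i hi => hf.measure_ne_zero (hdet.subset_Icc hi)
  have ⟨hmem, heq⟩ := optimal_representation_means_general hγn.ge hvmono
    ⟨hdet, hob, hic, hmax⟩ hjn (hmass j hjn hj)
  exact ⟨hmem, fun k hjk hk hki => heq k hjk hk (hmass k hk hki)⟩

end VerifiableDisclosure
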